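/- The triple (D(Ω), concatenation, {P_ω : ω ∈ Ω}) is the free Ω-operated monoid on the empty set. Precisely: for every monoid H and every family of maps α_ω : H → H (ω ∈ Ω), there exists a unique monoid homomorphism φ : D(Ω) → H such that φ(P_ω(w)) = α_ω(φ(w)) for every w ∈ D(Ω) and every ω ∈ Ω. -/

import Mathlib

/-- The left bracket letter `⌊_ω` as a one-letter word. -/
def lbr {Ω : Type*} (ω : Ω) : FreeMonoid (Ω ⊕ Ω) :=
  FreeMonoid.of (Sum.inl ω)

/-- The right bracket letter `⌋_ω` as a one-letter word. -/
def rbr {Ω : Type*} (ω : Ω) : FreeMonoid (Ω ⊕ Ω) :=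
  FreeMonoid.of (Sum.inr ω)

/-- The operator `P_ω` on the free monoid: `P_ω w = ⌊_ω w ⌋_ω`. -/
def Pop {Ω : Type*} (ω : Ω) (w : FreeMonoid (Ω ⊕ Ω)) : FreeMonoid (Ω ⊕ Ω) :=
  lbr ω * w * rbr ω

/-- `D(Ω)`: the set of `Ω`-decorated Dyck words, i.e. the smallest subset of the free monoid
on `{⌊_ω} ⊔ {⌋_ω}` containing `1`, closed under concatenation and all operators `P_ω`. -/
inductive IsDW (Ω : Type*) : FreeMonoid (Ω ⊕ Ω) → Prop
  | one : IsDW Ω 1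
  | mul {u v : FreeMonoid (Ω ⊕ Ω)} : IsDW Ω u → IsDW Ω v → IsDW Ω (u * v)
  | op (ω : Ω) {u : FreeMonoid (Ω ⊕ Ω)} : IsDW Ω u → IsDW Ω (Pop ω u)

/-- `D(Ω)` as a submonoid of the free monoid. -/
def DWsub (Ω : Type*) : Submonoid (FreeMonoid (Ω ⊕ Ω)) where
  carrier := {w | IsDW Ω w}
  one_mem' := IsDW.one
  mul_mem' := fun h1 h2 => IsDW.mul h1 h2

/-- The operator `P_ω` restricted to `D(Ω)`. -/
def PopSub {Ω : Type*} (ω : Ω) (w : DWsub Ω) : DWsub Ω :=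
  ⟨Pop ω w.1, IsDW.op ω w.2⟩

/-!
A bracket word acts on pairs consisting of a current value in `H` and a stack of suspended values,
its letters being read from right to left: `⌋_ω` suspends the current value and restarts from `1`,
while `⌊_ω` applies `α_ω` to the current value and multiplies the most recently suspended value by
the result. This action is defined on all words, so it is well defined without any unique
factorization of Dyck words. A Dyck word leaves the stack unchanged and multiplies the current value
on the left by a fixed element of `H`; that element is its image under the required homomorphism.
-/

section BracketAction

variable {Ω H : Type*} [Monoid H] (α : Ω → H → H)

/-- The transition of a stack machine for one bracket letter. The state `(h, s)` consists of the
current value `h` and the stack `s` of suspended values. An unmatched `⌊_ω`, which never occurs when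
a Dyck word is read, is ignored. -/
def bracketStep : Ω ⊕ Ω → Function.End (H × List H)
  | .inr _, (h, s) => (1, h :: s)
  | .inl ω, (h, g :: s) => (α ω h * g, s)
  | .inl _, (h, []) => (h, [])

/-- The action of bracket words on the states of the stack machine. Since `Function.End` multiplies
by composition, the last letter of a word acts first. -/
def bracketAction : FreeMonoid (Ω ⊕ Ω) →* Function.End (H × List H) :=
  FreeMonoid.lift (bracketStep α)

/-- The value of a bracket word: the current value reached from `1` and the empty stack. -/
def bracketValue (w : FreeMonoid (Ω ⊕ Ω)) : H :=
  (bracketAction α w (1, [])).1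

theorem bracketAction_mul_apply (u v : FreeMonoid (Ω ⊕ Ω)) (x : H × List H) :
    bracketAction α (u * v) x = bracketAction α u (bracketAction α v x) := by
  rw [map_mul]
  rfl

theorem bracketAction_Pop_apply (ω : Ω) (w : FreeMonoid (Ω ⊕ Ω)) (h : H) (s : List H) :
    bracketAction α (Pop ω w) (h, s) =
      bracketStep α (.inl ω) (bracketAction α w (1, h :: s)) := by
  rw [Pop, bracketAction_mul_apply, bracketAction_mul_apply]
  rfl

variable {w : FreeMonoid (Ω ⊕ Ω)}

theorem IsDW.exists_bracketAction_eq_mul (hw : IsDW Ω w) :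
    ∃ a : H, ∀ (h : H) (s : List H), bracketAction α w (h, s) = (a * h, s) := by
  induction hw with
  | one => exact ⟨1, fun h s => by rw [map_one, one_mul]; rfl⟩
  | mul _ _ ihu ihv =>
    obtain ⟨a, ha⟩ := ihu
    obtain ⟨b, hb⟩ := ihv
    exact ⟨a * b, fun h s => by rw [bracketAction_mul_apply, hb, ha, mul_assoc]⟩
  | op ω _ ihu =>
    obtain ⟨a, ha⟩ := ihu
    refine ⟨α ω a, fun h s => ?_⟩
    rw [bracketAction_Pop_apply, ha, mul_one]
    rfl

theorem IsDW.bracketAction_apply (hw : IsDW Ω w) (h : H) (s : List H) :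
    bracketAction α w (h, s) = (bracketValue α w * h, s) := by
  obtain ⟨a, ha⟩ := hw.exists_bracketAction_eq_mul α
  rw [bracketValue, ha, ha, mul_one]

theorem IsDW.bracketValue_mul {u v : FreeMonoid (Ω ⊕ Ω)} (hu : IsDW Ω u)
    (hv : IsDW Ω v) : bracketValue α (u * v) = bracketValue α u * bracketValue α v := by
  rw [bracketValue, bracketAction_mul_apply, hv.bracketAction_apply, hu.bracketAction_apply,
    mul_one]

theorem IsDW.bracketValue_Pop (hw : IsDW Ω w) (ω : Ω) :
    bracketValue α (Pop ω w) = α ω (bracketValue α w) := by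
  rw [bracketValue, bracketAction_Pop_apply, hw.bracketAction_apply, mul_one]
  exact mul_one (α ω (bracketValue α w))

end BracketAction

namespace DWsub

variable {Ω : Type*}

/-- The homomorphism from Dyck words to an operated monoid `(H, α)` that replaces each operator
`P_ω` by `α_ω`. -/
def eval {H : Type*} [Monoid H] (α : Ω → H → H) : DWsub Ω →* H where
  toFun w := bracketValue α w
  map_one' := rfl
  map_mul' u v := u.2.bracketValue_mul α v.2

theorem eval_PopSub {H : Type*} [Monoid H] (α : Ω → H → H) (ω : Ω) (w : DWsub Ω) :
    eval α (PopSub ω w) = α ω (eval α w) :=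
  w.2.bracketValue_Pop α ω

@[elab_as_elim]
theorem induction {p : DWsub Ω → Prop} (one : p 1) (mul : ∀ u v, p u → p v → p (u * v))
    (op : ∀ ω u, p u → p (PopSub ω u)) (w : DWsub Ω) : p w := by
  obtain ⟨w, hw⟩ := w
  induction hw with
  | one => exact one
  | mul hu hv ihu ihv => exact mul ⟨_, hu⟩ ⟨_, hv⟩ ihu ihv
  | op ω hu ihu => exact op ω ⟨_, hu⟩ ihu

theorem monoidHom_ext {M : Type*} [MulOneClass M] {φ ψ : DWsub Ω →* M}
    (h : ∀ ω w, φ w = ψ w → φ (PopSub ω w) = ψ (PopSub ω w)) : φ = ψ := by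
  ext w
  induction w using DWsub.induction with
  | one => rw [map_one, map_one]
  | mul u v hu hv => rw [map_mul, map_mul, hu, hv]
  | op ω u hu => exact h ω u hu

end DWsub

/-- `(D(Ω), concatenation, {P_ω})` is the free `Ω`-operated monoid on the empty set:
for every monoid `H` and family of maps `α_ω : H → H` there is a unique monoid homomorphism
`φ : D(Ω) → H` with `φ (P_ω w) = α_ω (φ w)` for all `w ∈ D(Ω)`, `ω ∈ Ω`. -/
theorem dyckWords_free_operated_monoid_on_empty
    (Ω : Type*) [Nonempty Ω]
    (H : Type*) [Monoid H] (α : Ω → H → H) :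
    ∃! φ : DWsub Ω →* H,
      ∀ (ω : Ω) (w : DWsub Ω), φ (PopSub ω w) = α ω (φ w) := by
  refine ⟨DWsub.eval α, DWsub.eval_PopSub α, fun ψ hψ => DWsub.monoidHom_ext fun ω w hw => ?_⟩
  rw [hψ, hw, DWsub.eval_PopSub]
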